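/- (Sweedler) Let H be a Hopf algebra over a field k. Then the space of left integrals on H, i.e., the subspace of the dual space H* consisting of all linear functionals ∫ : H → k satisfying x₍₁₎·∫(x₍₂₎) = ∫(x)·1_H for all x ∈ H, has dimension at most 1 over k. -/

import Mathlib

/-!
Let `f ⇀ x = x₍₁₎ f(x₍₂₎)` and `x ↼ f = f(x₍₁₎) x₍₂₎`, so that `f` is a left integral if and only if
`f ⇀ x = f(x) 1` for all `x`. Cancelling the antipode in the convolution algebra shows that a left
integral satisfies

* `y₍₁₎ f(x y₍₂₎) = S(x₍₁₎) f(x₍₂₎ y)`,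
* `x₍₁₎ f(x₍₂₎ S(y)) = f(x S(y₍₁₎)) y₍₂₎`.

Let `f ≠ 0`. By the first identity, `{w | f(H w) = 0}` is a left ideal stable under `w ↦ w ↼ φ`.
Writing `Δ(w) = ∑ eᵢ ⊗ (w ↼ φᵢ)`, which is possible as `H` is projective, we see that it contains
`S(w₍₁₎) w₍₂₎ = ε(w) 1` along with `w`, which forces `ε(w) = 0`. By the second identity,
`S(x) = 0` implies `f(H S(φ ⇀ x)) = 0`, hence `φ(x) = ε(S(φ ⇀ x)) = 0` for every functional `φ`:
the antipode is injective. Consequently `x ↼ (g ∘ S) = g(S(x)) 1` for every left integral `g`,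
since both sides have the same image under `S`. Applying `g` to the first identity now gives
`f(x (y ↼ g)) = g(S(x₍₁₎)) f(x₍₂₎ y) = g(S(x)) f(y)`.
So `f(y) = 0` implies `g(y) = ε(y ↼ g) = 0`, and `g` is determined by its value at any point where
`f` does not vanish.
-/

open TensorProduct

/-- A left integral on a Hopf algebra `H` over `k` is a linear functional `f : H → k`
such that `(id ⊗ f)(Δ x) = f x • 1` for all `x`, i.e. `x₍₁₎ • f x₍₂₎ = f x • 1`. -/
def IsLeftIntegral (k : Type*) [CommRing k] (H : Type*) [Ring H] [HopfAlgebra k H]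
    (f : H →ₗ[k] k) : Prop :=
  ∀ x : H, (TensorProduct.rid k H) (LinearMap.lTensor H f (Coalgebra.comul x)) = f x • (1 : H)

open Coalgebra HopfAlgebra WithConv

section Definitions

variable {R C : Type*} [CommSemiring R] [AddCommMonoid C] [Module R C] [Coalgebra R C]

/-- The left hit action `f ⇀ x = x₍₁₎ f(x₍₂₎)` of the dual of a coalgebra on the coalgebra. -/
noncomputable def leftHit : Module.Dual R C →ₗ[R] Module.End R C where
  toFun f := (TensorProduct.rid R C).toLinearMap ∘ₗ f.lTensor C ∘ₗ comul
  map_add' f g := by simp only [LinearMap.lTensor_add, LinearMap.add_comp, LinearMap.comp_add]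
  map_smul' r f := by
    simp only [LinearMap.lTensor_smul, LinearMap.smul_comp, LinearMap.comp_smul, RingHom.id_apply]

/-- The right hit action `x ↼ f = f(x₍₁₎) x₍₂₎` of the dual of a coalgebra on the coalgebra. -/
noncomputable def rightHit : Module.Dual R C →ₗ[R] Module.End R C where
  toFun f := (TensorProduct.lid R C).toLinearMap ∘ₗ f.rTensor C ∘ₗ comul
  map_add' f g := by simp only [LinearMap.rTensor_add, LinearMap.add_comp, LinearMap.comp_add]
  map_smul' r f := by
    simp only [LinearMap.rTensor_smul, LinearMap.smul_comp, LinearMap.comp_smul, RingHom.id_apply]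

/-- The left integrals on a Hopf algebra, as a submodule of its dual. -/
def leftIntegrals (k H : Type*) [CommRing k] [Ring H] [HopfAlgebra k H] :
    Submodule k (Module.Dual k H) where
  carrier := {f | IsLeftIntegral k H f}
  zero_mem' x := by simp
  add_mem' hf hg x := by simp [LinearMap.lTensor_add, hf x, hg x, add_smul]
  smul_mem' r f hf x := by simp [LinearMap.lTensor_smul, hf x, mul_smul]

end Definitions

local notation:70 f:71 " ⇀ " x:71 => leftHit f x
local notation:70 x:71 " ↼ " f:71 => rightHit f x

section Coalgebra

variable {R C ι : Type*} [CommSemiring R] [AddCommMonoid C] [Module R C] [Coalgebra R C] {x : C}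

lemma leftHit_eq_sum (𝓡 : Repr R x ι) (f : Module.Dual R C) :
    f ⇀ x = ∑ i ∈ 𝓡.index, f (𝓡.right i) • 𝓡.left i := by
  simp [leftHit, ← 𝓡.eq]

lemma rightHit_eq_sum (𝓡 : Repr R x ι) (f : Module.Dual R C) :
    x ↼ f = ∑ i ∈ 𝓡.index, f (𝓡.left i) • 𝓡.right i := by
  simp [rightHit, ← 𝓡.eq]

lemma apply_leftHit (f g : Module.Dual R C) (x : C) : g (f ⇀ x) = f (x ↼ g) := by
  simp [leftHit_eq_sum (ℛ R x), rightHit_eq_sum (ℛ R x), mul_comm]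

lemma counit_leftHit (f : Module.Dual R C) (x : C) : counit (R := R) (f ⇀ x) = f x := by
  simp [apply_leftHit, rightHit]

lemma counit_rightHit (f : Module.Dual R C) (x : C) : counit (R := R) (x ↼ f) = f x := by
  simp [← apply_leftHit, leftHit]

lemma exists_comul_eq_sum_tmul_rightHit [Module.Projective R C] (x : C) :
    ∃ (s : Finset C) (φ : C → Module.Dual R C), comul x = ∑ e ∈ s, e ⊗ₜ[R] (x ↼ φ e) := by
  classical
  obtain ⟨σ, hσ⟩ := Module.projective_def'.1 ‹Module.Projective R C›
  let s := (ℛ R x).index.biUnion fun i ↦ (σ ((ℛ R x).left i)).support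
  refine ⟨s, fun e ↦ Finsupp.lapply e ∘ₗ σ, ?_⟩
  have left_eq_sum : ∀ i ∈ (ℛ R x).index,
      (ℛ R x).left i = ∑ e ∈ s, σ ((ℛ R x).left i) e • e := fun i hi ↦ by
    conv_lhs => rw [← LinearMap.id_apply (R := R) ((ℛ R x).left i), ← hσ]
    exact Finsupp.sum_of_support_subset _ (Finset.subset_biUnion_of_mem
      (fun i ↦ (σ ((ℛ R x).left i)).support) hi) _ fun e _ ↦ zero_smul R e
  calc comul x = ∑ i ∈ (ℛ R x).index,
        (∑ e ∈ s, σ ((ℛ R x).left i) e • e) ⊗ₜ[R] (ℛ R x).right i := by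
        rw [← (ℛ R x).eq]
        exact Finset.sum_congr rfl fun i hi ↦ by rw [← left_eq_sum i hi]
    _ = ∑ e ∈ s, e ⊗ₜ[R] (x ↼ (Finsupp.lapply e ∘ₗ σ)) := by
        simp only [TensorProduct.sum_tmul, rightHit_eq_sum (ℛ R x), TensorProduct.tmul_sum,
          TensorProduct.smul_tmul, LinearMap.comp_apply, Finsupp.lapply_apply]
        exact Finset.sum_comm

variable {A : Type*} [Semiring A] [Algebra R A]

lemma convMul_smulRight_one (L : C →ₗ[R] A) (f : Module.Dual R C) (x : C) :
    (toConv L * toConv (f.smulRight (1 : A))).ofConv x = L (f ⇀ x) := by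
  simp [(ℛ R x).convMul_apply, leftHit_eq_sum (ℛ R x)]

lemma smulRight_one_convMul (f : Module.Dual R C) (L : C →ₗ[R] A) (x : C) :
    (toConv (f.smulRight (1 : A)) * toConv L).ofConv x = L (x ↼ f) := by
  simp [(ℛ R x).convMul_apply, rightHit_eq_sum (ℛ R x)]

end Coalgebra

section HopfAlgebra

variable {R A B ι : Type*} [CommSemiring R] [Semiring A] [HopfAlgebra R A]
  [Semiring B] [Algebra R B]

lemma comp_antipode_convMul_self (h : A →ₐ[R] B) :
    toConv (h.toLinearMap ∘ₗ antipode R) * toConv h.toLinearMap = 1 := by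
  have comp_convMul :=
    LinearMap.algHom_comp_convMul_distrib h (toConv (antipode R)) (toConv LinearMap.id)
  rw [LinearMap.antipode_mul_id] at comp_convMul
  apply WithConv.ofConv_injective
  refine comp_convMul.symm.trans ?_
  ext
  simp

lemma comul_antipode (x : A) :
    comul (R := R) (antipode R x) =
      TensorProduct.map (antipode R) (antipode R) (TensorProduct.comm R A A (comul x)) := by
  let inl : A →ₐ[R] A ⊗[R] A := Algebra.TensorProduct.includeLeft
  let inr : A →ₐ[R] A ⊗[R] A := Algebra.TensorProduct.includeRight
  have comul_eq : toConv (comul (R := R) (A := A)) =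
      toConv inl.toLinearMap * toConv inr.toLinearMap := by
    ext x
    simp [(ℛ R x).convMul_apply, inl, inr, (ℛ R x).eq]
  have inverse_eq :
      toConv (inr.toLinearMap ∘ₗ antipode R) * toConv (inl.toLinearMap ∘ₗ antipode R) =
        toConv (comul (R := R) (A := A) ∘ₗ antipode R) := by
    refine left_inv_eq_right_inv ?_ LinearMap.comul_right_inv
    rw [comul_eq, mul_assoc, ← mul_assoc _ (toConv inl.toLinearMap),
      comp_antipode_convMul_self, one_mul, comp_antipode_convMul_self]
  calc comul (antipode R x)
      = (toConv (inr.toLinearMap ∘ₗ antipode R) *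
          toConv (inl.toLinearMap ∘ₗ antipode R)).ofConv x := by rw [inverse_eq]; rfl
    _ = TensorProduct.map (antipode R) (antipode R) (TensorProduct.comm R A A (comul x)) := by
        simp [inl, inr, ← (ℛ R x).eq]

lemma leftHit_antipode (f : Module.Dual R A) (x : A) :
    f ⇀ (antipode R x) = antipode R (x ↼ (f ∘ₗ antipode R)) := by
  rw [rightHit_eq_sum (ℛ R x)]
  simp [leftHit, comul_antipode, ← (ℛ R x).eq]

lemma leftHit_mul {x : A} (𝓡 : Repr R x ι) (f : Module.Dual R A) (y : A) :
    f ⇀ (x * y) =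
      ∑ i ∈ 𝓡.index, 𝓡.left i * ((f ∘ₗ LinearMap.mulLeft R (𝓡.right i)) ⇀ y) := by
  simp [leftHit_eq_sum (𝓡.mul (ℛ R y)), leftHit_eq_sum (ℛ R y), Finset.sum_product,
    Finset.mul_sum]

lemma leftHit_mul_antipode {y : A} (𝓡 : Repr R y ι) (f : Module.Dual R A) (x : A) :
    f ⇀ (x * antipode R y) = ∑ i ∈ 𝓡.index,
      ((f ∘ₗ LinearMap.mulRight R (antipode R (𝓡.left i))) ⇀ x) * antipode R (𝓡.right i) := by
  simp only [leftHit_eq_sum (ℛ R x), Finset.sum_mul]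
  simp [leftHit, comul_antipode, ← 𝓡.eq, ← (ℛ R x).eq, Finset.sum_mul, Finset.mul_sum]

end HopfAlgebra

section Integral

variable {k H : Type*} [CommRing k] [Ring H] [HopfAlgebra k H] {f g : H →ₗ[k] k}

local notation "S" => antipode k (A := H)

lemma IsLeftIntegral.leftHit_eq (hf : IsLeftIntegral k H f) (x : H) : f ⇀ x = f x • (1 : H) :=
  hf x

lemma IsLeftIntegral.leftHit_comp_mulLeft (hf : IsLeftIntegral k H f) (x y : H) :
    (f ∘ₗ LinearMap.mulLeft k x) ⇀ y = S ((f ∘ₗ LinearMap.mulRight k y) ⇀ x) := by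
  let E : H →ₗ[k] H := leftHit.flip y ∘ₗ (LinearMap.mul k H).compr₂ f
  have id_mul_E : toConv LinearMap.id * toConv E =
      toConv ((f ∘ₗ LinearMap.mulRight k y).smulRight (1 : H)) := by
    ext x
    rw [(ℛ k x).convMul_apply]
    exact (leftHit_mul (ℛ k x) f y).symm.trans (hf.leftHit_eq (x * y))
  calc E x = (toConv S * (toConv LinearMap.id * toConv E)).ofConv x := by
        rw [← mul_assoc, LinearMap.antipode_mul_id, one_mul]
    _ = S ((f ∘ₗ LinearMap.mulRight k y) ⇀ x) := by
        rw [id_mul_E, convMul_smulRight_one]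

lemma IsLeftIntegral.leftHit_comp_mulRight_antipode (hf : IsLeftIntegral k H f) (x y : H) :
    (f ∘ₗ LinearMap.mulRight k (S y)) ⇀ x = y ↼ (f ∘ₗ LinearMap.mulLeft k x ∘ₗ S) := by
  let E : H →ₗ[k] H := leftHit.flip x ∘ₗ (LinearMap.mul k H).flip.compr₂ f ∘ₗ S
  have E_mul_antipode : toConv E * toConv S =
      toConv ((f ∘ₗ LinearMap.mulLeft k x ∘ₗ S).smulRight (1 : H)) := by
    ext y
    rw [(ℛ k y).convMul_apply]
    exact (leftHit_mul_antipode (ℛ k y) f x).symm.trans (hf.leftHit_eq (x * S y))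
  calc E y = (toConv E * toConv S * toConv LinearMap.id).ofConv y := by
        rw [mul_assoc, LinearMap.antipode_mul_id, mul_one]
    _ = y ↼ (f ∘ₗ LinearMap.mulLeft k x ∘ₗ S) := by
        rw [E_mul_antipode, smulRight_one_convMul, LinearMap.id_apply]

lemma IsLeftIntegral.rightHit_comp_antipode (hf : IsLeftIntegral k H f)
    (hS : Function.Injective S) (x : H) : x ↼ (f ∘ₗ S) = f (S x) • (1 : H) := by
  apply hS
  rw [← leftHit_antipode, hf.leftHit_eq, map_smul, antipode_one]

variable [Module.Projective k H]

lemma IsLeftIntegral.counit_smul_eq_zero (hf : IsLeftIntegral k H f) {w : H}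
    (hw : ∀ x, f (x * w) = 0) : counit (R := k) w • f = 0 := by
  have apply_mul_rightHit (x : H) (φ : Module.Dual k H) : f (x * (w ↼ φ)) = 0 := by
    have comp_mulRight : f ∘ₗ LinearMap.mulRight k w = 0 := LinearMap.ext hw
    calc (f ∘ₗ LinearMap.mulLeft k x) (w ↼ φ)
        = φ (S ((f ∘ₗ LinearMap.mulRight k w) ⇀ x)) := by
          rw [← apply_leftHit, hf.leftHit_comp_mulLeft]
      _ = 0 := by simp [comp_mulRight]
  obtain ⟨s, φ, comul_eq⟩ := exists_comul_eq_sum_tmul_rightHit (R := k) w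
  ext x
  calc counit (R := k) w * f x = f (x * algebraMap k H (counit w)) := by
        simp [Algebra.algebraMap_eq_smul_one]
    _ = ∑ e ∈ s, f (x * S e * (w ↼ φ e)) := by
        rw [← mul_antipode_rTensor_comul_apply, comul_eq]
        simp [Finset.mul_sum, mul_assoc]
    _ = 0 := Finset.sum_eq_zero fun e _ ↦ apply_mul_rightHit _ _

variable [IsDomain k]

lemma IsLeftIntegral.counit_eq_zero (hf : IsLeftIntegral k H f) (hf₀ : f ≠ 0) {w : H}
    (hw : ∀ x, f (x * w) = 0) : counit (R := k) w = 0 :=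
  (smul_eq_zero.1 (hf.counit_smul_eq_zero hw)).resolve_right hf₀

lemma IsLeftIntegral.antipode_injective (hf : IsLeftIntegral k H f) (hf₀ : f ≠ 0) :
    Function.Injective S := by
  refine (injective_iff_map_eq_zero _).2 fun x hx ↦
    (Module.forall_dual_apply_eq_zero_iff k x).1 fun φ ↦ ?_
  have apply_mul_antipode (y : H) : f (y * S (φ ⇀ x)) = 0 :=
    calc (f ∘ₗ LinearMap.mulLeft k y ∘ₗ S) (φ ⇀ x)
        = φ ((f ∘ₗ LinearMap.mulRight k (S x)) ⇀ y) := by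
          rw [apply_leftHit, hf.leftHit_comp_mulRight_antipode]
      _ = 0 := by simp [hx]
  simpa [counit_leftHit] using hf.counit_eq_zero hf₀ apply_mul_antipode

lemma IsLeftIntegral.ker_le_ker (hf : IsLeftIntegral k H f) (hf₀ : f ≠ 0)
    (hg : IsLeftIntegral k H g) : f.ker ≤ g.ker := by
  intro y (hy : f y = 0)
  rw [LinearMap.mem_ker, ← counit_rightHit g]
  refine hf.counit_eq_zero hf₀ fun x ↦ ?_
  calc (f ∘ₗ LinearMap.mulLeft k x) (y ↼ g)
      = g (S ((f ∘ₗ LinearMap.mulRight k y) ⇀ x)) := by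
        rw [← apply_leftHit, hf.leftHit_comp_mulLeft]
    _ = f ((x ↼ (g ∘ₗ S)) * y) := apply_leftHit _ (g ∘ₗ S) x
    _ = g (S x) * f y := by simp [hg.rightHit_comp_antipode (hf.antipode_injective hf₀)]
    _ = 0 := by rw [hy, mul_zero]

end Integral

theorem rank_leftIntegrals_le_one_general (k : Type*) [CommRing k] [IsDomain k]
    (H : Type*) [Ring H] [HopfAlgebra k H] [Module.Projective k H] :
    Module.rank k ↥(Submodule.span k {f : H →ₗ[k] k | IsLeftIntegral k H f}) ≤ 1 := by
  change Module.rank k (Submodule.span k (leftIntegrals k H : Set (Module.Dual k H))) ≤ 1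
  rw [Submodule.span_eq]
  obtain eq_bot | ne_bot := eq_or_ne (leftIntegrals k H) ⊥
  · rw [eq_bot, rank_bot]
    exact zero_le_one
  obtain ⟨f, hf, hf₀⟩ := (leftIntegrals k H).exists_mem_ne_zero_of_ne_bot ne_bot
  obtain ⟨y, hy⟩ : ∃ y, f y ≠ 0 := DFunLike.ne_iff.1 hf₀
  let evalAt : leftIntegrals k H →ₗ[k] k := Module.Dual.eval k H y ∘ₗ (leftIntegrals k H).subtype
  have evalAt_injective : Function.Injective evalAt := by
    refine (injective_iff_map_eq_zero _).2 fun g hg ↦ ?_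
    by_contra hg₀
    exact hy (IsLeftIntegral.ker_le_ker g.2 (mt (Subtype.ext ·) hg₀) hf hg)
  simpa using LinearMap.lift_rank_le_of_injective evalAt evalAt_injective

/-- (Sweedler) The space of left integrals on a Hopf algebra has dimension at most 1. -/
theorem rank_leftIntegrals_le_one (k : Type*) [Field k]
    (H : Type*) [Ring H] [HopfAlgebra k H] :
    Module.rank k ↥(Submodule.span k {f : H →ₗ[k] k | IsLeftIntegral k H f}) ≤ 1 :=
  rank_leftIntegrals_le_one_general k H
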